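/- There is a constant κ_a>0, independent of ρ, such that for any real ρ>0 and any integer x with |x| ≤ ρ, the simple random walk on the comb started at the origin satisfies P_0( H({(x,0)}) < ℰ(ρ) ) ≥ κ_a·((ρ−|x|)/ρ)². -/

import Mathlib

open MeasureTheory ENNReal
open scoped Pointwise

/-- Adjacency in the comb lattice `𝒞`. -/
def combAdj (z w : ℤ × ℤ) : Prop :=
  (z.1 = w.1 ∧ |z.2 - w.2| = 1) ∨ (z.2 = 0 ∧ w.2 = 0 ∧ |z.1 - w.1| = 1)

/-- Degree of a vertex in the comb. -/
def combDeg (z : ℤ × ℤ) : ℕ := if z.2 = 0 then 4 else 2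

open Classical in
/-- One-step transition probability of the simple random walk on the comb. -/
noncomputable def stepProb (z w : ℤ × ℤ) : ℝ≥0∞ :=
  if combAdj z w then ((combDeg z : ℝ≥0∞))⁻¹ else 0

/-- Probability that the walk started at `v` follows the given finite path. -/
noncomputable def pathProb (v : ℤ × ℤ) {n : ℕ} (path : Fin (n + 1) → ℤ × ℤ) : ℝ≥0∞ :=
  (if path 0 = v then 1 else 0) * ∏ i : Fin n, stepProb (path i.castSucc) (path i.succ)

/-- `S` is a simple random walk on the comb started at `v`, under the probability
measure `P` (characterized by its finite-dimensional distributions). -/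
def IsCombWalk {Ω : Type*} [MeasurableSpace Ω] (P : Measure Ω)
    (S : ℕ → Ω → ℤ × ℤ) (v : ℤ × ℤ) : Prop :=
  IsProbabilityMeasure P ∧ (∀ t, Measurable (S t)) ∧
    ∀ (n : ℕ) (path : Fin (n + 1) → ℤ × ℤ),
      P {ω | ∀ i : Fin (n + 1), S i ω = path i} = pathProb v path

/-- `W i`, `i : ℕ`, are i.i.d. simple random walks on the comb started at the origin. -/
def IsIIDCombWalks {Ω : Type*} [MeasurableSpace Ω] (P : Measure Ω)
    (W : ℕ → ℕ → Ω → ℤ × ℤ) : Prop :=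
  IsProbabilityMeasure P ∧ (∀ i t, Measurable (W i t)) ∧
    ∀ (k n : ℕ) (path : Fin k → Fin (n + 1) → ℤ × ℤ),
      P {ω | ∀ i : Fin k, ∀ t : Fin (n + 1), W i t ω = path i t} =
        ∏ i : Fin k, pathProb (0, 0) (path i)

/-- The domain `𝒟(ρ) = D(ρ) ∩ ℤ²`. -/
def combD (ρ : ℝ) : Set (ℤ × ℤ) :=
  {z | |(z.1 : ℝ)| < ρ ∧ |(z.2 : ℝ)| < (ρ - |(z.1 : ℝ)|) ^ 2 / 3}

/-- The boundary `∂𝒟(ρ)`: sites outside `𝒟(ρ)` at graph distance 1 from `𝒟(ρ)`. -/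
def combBoundary (ρ : ℝ) : Set (ℤ × ℤ) :=
  {z | z ∉ combD ρ ∧ ∃ w ∈ combD ρ, combAdj w z}

/-- Hitting time of a set by a trajectory (`⊤` if the set is never hit). -/
noncomputable def hitTime (Λ : Set (ℤ × ℤ)) (traj : ℕ → ℤ × ℤ) : ℕ∞ :=
  ⨅ (m : ℕ) (_ : traj m ∈ Λ), (m : ℕ∞)

/-- The trajectory exits `D` for the first time at the site `z`. -/
def exitsAt (D : Set (ℤ × ℤ)) (z : ℤ × ℤ) (traj : ℕ → ℤ × ℤ) : Prop :=
  ∃ n : ℕ, (∀ m < n, traj m ∈ D) ∧ traj n ∉ D ∧ traj n = z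

/-- Green's function of the walk `S` killed upon exiting `Λ`:
expected number of visits to `y` strictly before the exit time. -/
noncomputable def greenFn {Ω : Type*} [MeasurableSpace Ω] (P : Measure Ω)
    (S : ℕ → Ω → ℤ × ℤ) (Λ : Set (ℤ × ℤ)) (y : ℤ × ℤ) : ℝ≥0∞ :=
  ∑' n : ℕ, P {ω | (∀ m ≤ n, S m ω ∈ Λ) ∧ S n ω = y}

/-- The parent `𝒜(z)` of a vertex of the comb: its unique neighbor closer to the origin. -/
def parent (z : ℤ × ℤ) : ℤ × ℤ :=
  if z.2 = 0 then (z.1 - Int.sign z.1, 0) else (z.1, z.2 - Int.sign z.2)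

/-- First site outside `A` visited by the trajectory: the settlement site of an explorer. -/
noncomputable def settlePoint (A : Set (ℤ × ℤ)) (traj : ℕ → ℤ × ℤ) : ℤ × ℤ :=
  traj (sInf {n | traj n ∉ A})

/-- The internal DLA cluster after `k` explorers with trajectories `W 0, …, W (k-1)`. -/
noncomputable def dlaCluster (W : ℕ → ℕ → ℤ × ℤ) : ℕ → Set (ℤ × ℤ)
  | 0 => ∅
  | k + 1 => dlaCluster W k ∪ {settlePoint (dlaCluster W k) (W k)}

open Classical in
/-- Toppling at `x` for the divisible sandpile: the mass exceeding 1 at `x`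
is distributed equally among the neighbors of `x` in the comb. -/
noncomputable def topple (x : ℤ × ℤ) (μ : ℤ × ℤ → ℝ) : ℤ × ℤ → ℝ := fun z =>
  if μ x ≤ 1 then μ z
  else if z = x then 1
  else if combAdj x z then μ z + (μ x - 1) / (combDeg x : ℝ)
  else μ z

/-- Mass distribution of the divisible sandpile started with mass `mass` at the
origin, after `k` topplings along the sequence `seq`. -/
noncomputable def sandMass (seq : ℕ → ℤ × ℤ) (mass : ℝ) : ℕ → ℤ × ℤ → ℝ
  | 0 => fun z => if z = (0, 0) then mass else 0
  | k + 1 => topple (seq k) (sandMass seq mass k)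

/-- The odometer of the divisible sandpile: total mass emitted from `z`. -/
noncomputable def odometer (seq : ℕ → ℤ × ℤ) (mass : ℝ) (z : ℤ × ℤ) : ℝ :=
  ∑' k : ℕ, if seq k = z then max (sandMass seq mass k z - 1) 0 else 0

/-- The divisible sandpile cluster: sites which emitted positive mass. -/
def sandCluster (seq : ℕ → ℤ × ℤ) (mass : ℝ) : Set (ℤ × ℤ) :=
  {z | 0 < odometer seq mass z}

/-- Euclidean ball `𝔹(R)` of radius `R` in `ℤ²`. -/
def ballZ (R : ℝ) : Set (ℤ × ℤ) :=
  {z | Real.sqrt ((z.1 : ℝ) ^ 2 + (z.2 : ℝ) ^ 2) < R}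

/-- Smallest integer `≥ (ρ - x)²/3`. -/
noncomputable def Lrho (ρ : ℝ) (x : ℤ) : ℕ := ⌈(ρ - (x : ℝ)) ^ 2 / 3⌉₊

/-- Smallest integer `≥ (ρ - |x|)²/3`. -/
noncomputable def LrhoAbs (ρ : ℝ) (x : ℤ) : ℕ := ⌈(ρ - |(x : ℝ)|) ^ 2 / 3⌉₊

open Filter Topology

/-!
Let `u` be subharmonic for the walk on `D \ A`, with `u ≤ 0` off `D` and `u ≤ C` on `A`. As `D` is
finite, the maximum principle compares `u` with `C` times the probability of hitting `A` before
leaving `D`, so this probability is at least `u z / C` from `z`.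

For `D = 𝒟(ρ)` and `A = {(X, 0)}`, take `u` linear on each tooth, from a value `φ t` on the axis
down to `0` at height `(ρ - |t|)² / 3`. Subharmonicity on the axis then reads
`2 φ(t) (1 + 3 / (ρ - |t|)²) ≤ φ(t + 1) + φ(t - 1)`, a discrete form of `φ'' ≥ 6 φ / (ρ - |t|)²`.
The continuous equation has the solutions `b³` and `b⁻²` in `b = ρ - |t|`: the first is used to the
left of the origin and the second, lowered by a constant to match slopes at `0`, between `0` and
`X`. Then `φ 0 = 1` and `φ X ≤ (3 / 2) (ρ / (ρ - X))²`.
-/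

/-! ### Averaging over neighbors and the maximum principle -/

/-- The neighbors of a vertex of the comb, as a finite set to sum over. -/
def combNeighbors (z : ℤ × ℤ) : Finset (ℤ × ℤ) :=
  if z.2 = 0 then {(z.1 + 1, 0), (z.1 - 1, 0), (z.1, 1), (z.1, -1)}
  else {(z.1, z.2 + 1), (z.1, z.2 - 1)}

theorem mem_combNeighbors {z w : ℤ × ℤ} : w ∈ combNeighbors z ↔ combAdj z w := by
  rw [combNeighbors, combAdj, abs_eq zero_le_one, abs_eq zero_le_one]
  split_ifs <;> simp only [Finset.mem_insert, Finset.mem_singleton, Prod.ext_iff] <;> omega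

theorem stepProb_of_mem_combNeighbors {z w : ℤ × ℤ} (hw : w ∈ combNeighbors z) :
    stepProb z w = (combDeg z : ℝ≥0∞)⁻¹ :=
  if_pos (mem_combNeighbors.mp hw)

/-- The transition operator of the simple random walk on the comb: `combAvg f z` is the expected
value of `f` after one step from `z`. -/
noncomputable def combAvg (f : ℤ × ℤ → ℝ) (z : ℤ × ℤ) : ℝ :=
  ∑ w ∈ combNeighbors z, (stepProb z w).toReal * f w

theorem combAvg_eq_inv_mul_sum (f : ℤ × ℤ → ℝ) (z : ℤ × ℤ) :
    combAvg f z = (combDeg z : ℝ)⁻¹ * ∑ w ∈ combNeighbors z, f w := by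
  rw [combAvg, Finset.mul_sum]
  refine Finset.sum_congr rfl fun w hw => ?_
  rw [stepProb_of_mem_combNeighbors hw, ENNReal.toReal_inv, ENNReal.toReal_natCast]

theorem combAvg_axis (f : ℤ × ℤ → ℝ) (x : ℤ) :
    combAvg f (x, 0) = (f (x + 1, 0) + f (x - 1, 0) + f (x, 1) + f (x, -1)) / 4 := by
  have h_sum : ∑ w ∈ combNeighbors (x, 0), f w =
      f (x + 1, 0) + (f (x - 1, 0) + (f (x, 1) + f (x, -1))) := by
    rw [combNeighbors, if_pos rfl, Finset.sum_insert, Finset.sum_insert, Finset.sum_pair]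
    all_goals
      simp only [Finset.mem_insert, Finset.mem_singleton, Prod.ext_iff, ne_eq]
      omega
  rw [combAvg_eq_inv_mul_sum, h_sum, combDeg, if_pos rfl]
  push_cast
  ring

theorem combAvg_tooth (f : ℤ × ℤ → ℝ) (x : ℤ) {y : ℤ} (hy : y ≠ 0) :
    combAvg f (x, y) = (f (x, y + 1) + f (x, y - 1)) / 2 := by
  have h_sum : ∑ w ∈ combNeighbors (x, y), f w = f (x, y + 1) + f (x, y - 1) := by
    rw [combNeighbors, if_neg hy, Finset.sum_pair]
    simp only [Prod.ext_iff, ne_eq]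
    omega
  rw [combAvg_eq_inv_mul_sum, h_sum, combDeg, if_neg hy]
  push_cast
  ring

theorem combAvg_mono : Monotone combAvg := fun _ _ hfg _ =>
  Finset.sum_le_sum fun w _ => mul_le_mul_of_nonneg_left (hfg w) ENNReal.toReal_nonneg

theorem combAvg_const (c : ℝ) (z : ℤ × ℤ) : combAvg (fun _ => c) z = c := by
  obtain ⟨x, y⟩ := z
  by_cases hy : y = 0
  · rw [hy, combAvg_axis]
    ring
  · rw [combAvg_tooth _ _ hy]
    ring

theorem combAvg_sub_const_mul (f g : ℤ × ℤ → ℝ) (c : ℝ) (z : ℤ × ℤ) :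
    combAvg (fun w => f w - c * g w) z = combAvg f z - c * combAvg g z := by
  simp only [combAvg, Finset.mul_sum, ← Finset.sum_sub_distrib]
  exact Finset.sum_congr rfl fun _ _ => by ring

theorem tendsto_combAvg {f : ℕ → ℤ × ℤ → ℝ} {g : ℤ × ℤ → ℝ}
    (h : ∀ z, Tendsto (fun n => f n z) atTop (𝓝 (g z))) (z : ℤ × ℤ) :
    Tendsto (fun n => combAvg (f n) z) atTop (𝓝 (combAvg g z)) :=
  tendsto_finsetSum _ fun w _ => (h w).const_mul _

/-- `f` is subharmonic on `D` for the simple random walk on the comb. -/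
def CombSubharmonicOn (f : ℤ × ℤ → ℝ) (D : Set (ℤ × ℤ)) : Prop :=
  ∀ z ∈ D, f z ≤ combAvg f z

theorem apply_above_eq_of_le_combAvg {f : ℤ × ℤ → ℝ} {x y : ℤ} (hmax : ∀ w, f w ≤ f (x, y))
    (hf : f (x, y) ≤ combAvg f (x, y)) : f (x, y + 1) = f (x, y) := by
  refine (hmax _).antisymm ?_
  by_cases hy : y = 0
  · subst hy
    rw [combAvg_axis] at hf
    rw [zero_add]
    linarith [hmax (x + 1, 0), hmax (x - 1, 0), hmax (x, -1)]
  · rw [combAvg_tooth f x hy] at hf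
    linarith [hmax (x, y - 1)]

theorem CombSubharmonicOn.nonpos_of_nonpos_off {f : ℤ × ℤ → ℝ} {D : Set (ℤ × ℤ)}
    (hf : CombSubharmonicOn f D) (hD : D.Finite) (hoff : ∀ z ∉ D, f z ≤ 0) (z : ℤ × ℤ) :
    f z ≤ 0 := by
  by_contra! hz
  have mem_of_pos {w : ℤ × ℤ} (hw : 0 < f w) : w ∈ D := not_imp_comm.mp (hoff w) hw.not_ge
  obtain ⟨m, hmD, hmax⟩ := D.exists_max_image f hD ⟨z, mem_of_pos hz⟩
  have hm : 0 < f m := hz.trans_le (hmax z (mem_of_pos hz))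
  have hmax_all (w : ℤ × ℤ) : f w ≤ f m :=
    (em (w ∈ D)).elim (hmax w) fun hw => (hoff w hw).trans hm.le
  -- The vertex above a maximum point is a maximum point, so no maximum point in `D` is highest.
  obtain ⟨⟨x, y⟩, ⟨htop, htop_eq⟩, hhighest⟩ := {w ∈ D | f w = f m}.exists_max_image Prod.snd
    (hD.subset (Set.sep_subset _ _)) ⟨m, hmD, rfl⟩
  have habove : f (x, y + 1) = f m :=
    (apply_above_eq_of_le_combAvg (fun w => htop_eq ▸ hmax_all w) (hf _ htop)).trans htop_eq
  have hle : y + 1 ≤ y := hhighest (x, y + 1) ⟨mem_of_pos (habove ▸ hm), habove⟩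
  omega

/-! ### The Dirichlet problem for hitting probabilities -/

open Classical in
/-- One step of value iteration for the probability of hitting `A` before leaving `D`: impose the
boundary values `1` on `A ∩ D` and `0` off `D`, and average over neighbors on `D \ A`. -/
noncomputable def dirichletStep (D A : Set (ℤ × ℤ)) (f : ℤ × ℤ → ℝ) (z : ℤ × ℤ) : ℝ :=
  if z ∈ D then if z ∈ A then 1 else combAvg f z else 0

/-- The probability that the walk from `z` hits `A` strictly before time `n` and before
leaving `D`. -/
noncomputable def hitProbBefore (D A : Set (ℤ × ℤ)) (n : ℕ) : ℤ × ℤ → ℝ :=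
  (dirichletStep D A)^[n] 0

/-- The probability that the walk from `z` hits `A` before leaving `D`, as the limit of
`hitProbBefore`. -/
noncomputable def hitProb (D A : Set (ℤ × ℤ)) (z : ℤ × ℤ) : ℝ :=
  ⨆ n, hitProbBefore D A n z

section Dirichlet

variable {D A : Set (ℤ × ℤ)}

theorem dirichletStep_mono : Monotone (dirichletStep D A) := by
  intro f g hfg z
  unfold dirichletStep
  split_ifs
  exacts [le_rfl, combAvg_mono hfg z, le_rfl]

theorem hitProbBefore_succ (n : ℕ) :
    hitProbBefore D A (n + 1) = dirichletStep D A (hitProbBefore D A n) :=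
  Function.iterate_succ_apply' _ _ _

theorem hitProbBefore_mono : Monotone (hitProbBefore D A) := by
  refine dirichletStep_mono.monotone_iterate_of_le_map fun z => ?_
  unfold dirichletStep
  split_ifs
  exacts [zero_le_one, (combAvg_const 0 z).ge, le_rfl]

theorem hitProbBefore_le_one (n : ℕ) : hitProbBefore D A n ≤ 1 := by
  induction n with
  | zero => exact fun _ => zero_le_one
  | succ n ih =>
    rw [hitProbBefore_succ]
    refine (dirichletStep_mono ih).trans fun z => ?_
    unfold dirichletStep
    split_ifs
    exacts [le_rfl, (combAvg_const 1 z).le, zero_le_one]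

theorem tendsto_hitProbBefore (z : ℤ × ℤ) :
    Tendsto (fun n => hitProbBefore D A n z) atTop (𝓝 (hitProb D A z)) :=
  tendsto_atTop_ciSup (fun _ _ hmn => hitProbBefore_mono hmn z)
    ⟨1, Set.forall_mem_range.mpr fun n => hitProbBefore_le_one n z⟩

theorem dirichletStep_hitProb (z : ℤ × ℤ) : dirichletStep D A (hitProb D A) z = hitProb D A z := by
  refine tendsto_nhds_unique ?_ ((tendsto_add_atTop_iff_nat 1).mpr (tendsto_hitProbBefore z))
  simp only [hitProbBefore_succ]
  unfold dirichletStep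
  split_ifs
  exacts [tendsto_const_nhds, tendsto_combAvg tendsto_hitProbBefore z, tendsto_const_nhds]

theorem CombSubharmonicOn.le_mul_hitProb {u : ℤ × ℤ → ℝ} {C : ℝ}
    (hu : CombSubharmonicOn u (D \ A)) (hD : D.Finite) (hoff : ∀ z ∉ D, u z ≤ 0)
    (hA : ∀ z ∈ A, u z ≤ C) (z : ℤ × ℤ) : u z ≤ C * hitProb D A z := by
  have hsub : CombSubharmonicOn (fun w => u w - C * hitProb D A w) (D \ A) := fun w hw => by
    have hharm : hitProb D A w = combAvg (hitProb D A) w := by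
      rw [← dirichletStep_hitProb, dirichletStep, if_pos hw.1, if_neg hw.2]
    rw [combAvg_sub_const_mul, ← hharm]
    exact sub_le_sub_right (hu w hw) _
  refine sub_nonpos.mp (hsub.nonpos_of_nonpos_off hD.sdiff (fun w hw => ?_) z)
  rw [← dirichletStep_hitProb]
  by_cases hwD : w ∈ D
  · have hwA : w ∈ A := by_contra fun hwA => hw ⟨hwD, hwA⟩
    rw [dirichletStep, if_pos hwD, if_pos hwA]
    linarith [hA w hwA]
  · rw [dirichletStep, if_neg hwD]
    linarith [hoff w hwD]

end Dirichlet

/-! ### Comparison with the law of the walk -/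

section Law

variable {Ω : Type*} {S : ℕ → Ω → ℤ × ℤ} {D A : Set (ℤ × ℤ)}

/-- The event that `S` follows the path `p` up to and including time `k`. -/
def pathEvent (S : ℕ → Ω → ℤ × ℤ) (p : ℕ → ℤ × ℤ) (k : ℕ) : Set Ω :=
  {ω | ∀ i ≤ k, S i ω = p i}

/-- The event `H(A) < H(Dᶜ)`: `S` hits `A` before leaving `D`. -/
def hitsBeforeExit (S : ℕ → Ω → ℤ × ℤ) (D A : Set (ℤ × ℤ)) : Set Ω :=
  {ω | hitTime A (fun t => S t ω) < hitTime Dᶜ (fun t => S t ω)}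

theorem hitTime_lt_hitTime_compl {traj : ℕ → ℤ × ℤ} {k : ℕ} (hA : traj k ∈ A)
    (hD : ∀ i ≤ k, traj i ∈ D) : hitTime A traj < hitTime Dᶜ traj :=
  calc hitTime A traj ≤ k := iInf₂_le k hA
    _ < (k + 1 : ℕ) := by exact_mod_cast k.lt_succ_self
    _ ≤ hitTime Dᶜ traj := le_iInf₂ fun m hm => by
      have : k < m := lt_of_not_ge fun hmk => hm (hD m hmk)
      exact_mod_cast this

theorem pathEvent_subset_hitsBeforeExit {p : ℕ → ℤ × ℤ} {k : ℕ} (hA : p k ∈ A)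
    (hD : ∀ i ≤ k, p i ∈ D) : pathEvent S p k ⊆ hitsBeforeExit S D A := fun ω hω =>
  hitTime_lt_hitTime_compl (k := k) (by rwa [hω k le_rfl]) fun i hi => by
    rw [hω i hi]
    exact hD i hi

theorem pathEvent_update_subset (p : ℕ → ℤ × ℤ) (k : ℕ) (w : ℤ × ℤ) :
    pathEvent S (Function.update p (k + 1) w) (k + 1) ⊆ pathEvent S p k := fun ω hω i hi => by
  rw [hω i (by omega), Function.update_of_ne (by omega)]

theorem pairwise_disjoint_pathEvent_update (p : ℕ → ℤ × ℤ) (k : ℕ) :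
    Pairwise (Function.onFun Disjoint
      fun w => pathEvent S (Function.update p (k + 1) w) (k + 1)) := by
  refine fun w w' hne => Set.disjoint_left.mpr fun ω hw hw' => hne ?_
  have hk := (hw (k + 1) le_rfl).symm.trans (hw' (k + 1) le_rfl)
  rwa [Function.update_self, Function.update_self] at hk

variable [MeasurableSpace Ω]

theorem measurableSet_pathEvent (hS : ∀ t, Measurable (S t)) (p : ℕ → ℤ × ℤ) (k : ℕ) :
    MeasurableSet (pathEvent S p k) := by
  simp only [pathEvent, Set.ofPred_forall]
  exact .iInter fun i => .iInter fun _ => hS i (measurableSet_singleton (p i))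

theorem sum_measureReal_pathEvent_update_le (Q : Measure Ω) [IsFiniteMeasure Q]
    (hS : ∀ t, Measurable (S t)) (p : ℕ → ℤ × ℤ) (k : ℕ) (s : Finset (ℤ × ℤ)) :
    ∑ w ∈ s, Q.real (pathEvent S (Function.update p (k + 1) w) (k + 1)) ≤
      Q.real (pathEvent S p k) := by
  rw [← measureReal_biUnion_finset ((pairwise_disjoint_pathEvent_update p k).set_pairwise _)
    fun w _ => measurableSet_pathEvent hS _ _]
  exact measureReal_mono (Set.iUnion₂_subset fun w _ => pathEvent_update_subset p k w)

variable {P : Measure Ω} {v : ℤ × ℤ}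

theorem IsCombWalk.measure_pathEvent (hS : IsCombWalk P S v) (p : ℕ → ℤ × ℤ) (k : ℕ) :
    P (pathEvent S p k) =
      (if p 0 = v then 1 else 0) * ∏ i ∈ Finset.range k, stepProb (p i) (p (i + 1)) := by
  have hfin : pathEvent S p k = {ω | ∀ i : Fin (k + 1), S i ω = p i} := by
    simp only [pathEvent, Fin.forall_iff, Nat.lt_succ_iff]
  rw [hfin, hS.2.2 k fun i => p i, pathProb, Finset.prod_range]
  rfl

theorem IsCombWalk.measure_pathEvent_update (hS : IsCombWalk P S v) (p : ℕ → ℤ × ℤ) (k : ℕ)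
    (w : ℤ × ℤ) : P (pathEvent S (Function.update p (k + 1) w) (k + 1)) =
      P (pathEvent S p k) * stepProb (p k) w := by
  have hupdate {i : ℕ} (hi : i ≤ k) : Function.update p (k + 1) w i = p i :=
    Function.update_of_ne (by omega) _ _
  have hprod : ∏ i ∈ Finset.range k, stepProb (Function.update p (k + 1) w i)
      (Function.update p (k + 1) w (i + 1)) = ∏ i ∈ Finset.range k, stepProb (p i) (p (i + 1)) :=
    Finset.prod_congr rfl fun i hi => by
      have := Finset.mem_range.mp hi
      rw [hupdate (by omega), hupdate (by omega)]
  rw [hS.measure_pathEvent, hS.measure_pathEvent, Finset.prod_range_succ, mul_assoc, hprod,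
    Function.update_self, hupdate le_rfl, hupdate k.zero_le]

theorem IsCombWalk.measureReal_pathEvent_mul_hitProbBefore_le (hS : IsCombWalk P S v) (n : ℕ)
    (p : ℕ → ℤ × ℤ) (k : ℕ) (hp : ∀ i < k, p i ∈ D) :
    P.real (pathEvent S p k) * hitProbBefore D A n (p k) ≤
      (P.restrict (hitsBeforeExit S D A)).real (pathEvent S p k) := by
  have := hS.1
  set Q := P.restrict (hitsBeforeExit S D A) with hQ
  induction n generalizing p k with
  | zero => simp [hitProbBefore]
  | succ n ih =>
    rw [hitProbBefore_succ, dirichletStep]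
    split_ifs with hD hA
    · have hp' : ∀ i ≤ k, p i ∈ D := fun i hi => hi.lt_or_eq.elim (hp i) (· ▸ hD)
      rw [mul_one, hQ, measureReal_restrict_apply (measurableSet_pathEvent hS.2.1 p k),
        Set.inter_eq_left.mpr (pathEvent_subset_hitsBeforeExit hA hp')]
    · have hstep (w : ℤ × ℤ) : P.real (pathEvent S p k) *
          ((stepProb (p k) w).toReal * hitProbBefore D A n w) ≤
            Q.real (pathEvent S (Function.update p (k + 1) w) (k + 1)) := by
        have hext := ih (Function.update p (k + 1) w) (k + 1) fun i hi => by
          rw [Function.update_of_ne (by omega)]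
          exact (Nat.lt_succ_iff.mp hi).lt_or_eq.elim (hp i) (· ▸ hD)
        rwa [Function.update_self, measureReal_def, hS.measure_pathEvent_update,
          ENNReal.toReal_mul, mul_assoc] at hext
      rw [combAvg, Finset.mul_sum]
      exact (Finset.sum_le_sum fun w _ => hstep w).trans
        (sum_measureReal_pathEvent_update_le Q hS.2.1 p k _)
    · rw [mul_zero]
      exact measureReal_nonneg

theorem IsCombWalk.hitProb_le_measureReal (hS : IsCombWalk P S v) :
    hitProb D A v ≤ P.real (hitsBeforeExit S D A) := by
  have := hS.1
  refine le_of_tendsto' (tendsto_hitProbBefore v) fun n => ?_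
  have hstart : P.real (pathEvent S (fun _ => v) 0) = 1 := by
    simp [measureReal_def, hS.measure_pathEvent]
  have hle := hS.measureReal_pathEvent_mul_hitProbBefore_le (D := D) (A := A) n (fun _ => v) 0
    (by simp)
  rw [hstart, one_mul] at hle
  refine hle.trans ((measureReal_mono (Set.subset_univ _)).trans_eq ?_)
  rw [measureReal_restrict_apply .univ, Set.univ_inter]

end Law

/-! ### Reflection symmetry -/

/-- The reflection `(x, y) ↦ (-x, y)` of the comb. -/
def combReflect (z : ℤ × ℤ) : ℤ × ℤ := (-z.1, z.2)

theorem combReflect_combReflect (z : ℤ × ℤ) : combReflect (combReflect z) = z := by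
  simp [combReflect]

theorem combReflect_eq_iff {z w : ℤ × ℤ} : combReflect z = w ↔ z = combReflect w :=
  Function.Involutive.eq_iff combReflect_combReflect

theorem stepProb_combReflect (z w : ℤ × ℤ) :
    stepProb (combReflect z) (combReflect w) = stepProb z w := by
  have hadj : combAdj (combReflect z) (combReflect w) ↔ combAdj z w := by
    simp only [combAdj, combReflect, neg_inj, neg_sub_neg, abs_sub_comm w.1]
  have hdeg : combDeg (combReflect z) = combDeg z := rfl
  rw [stepProb, stepProb, hdeg]
  congr 1
  exact propext hadj

theorem IsCombWalk.reflect {Ω : Type*} [MeasurableSpace Ω] {P : Measure Ω}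
    {S : ℕ → Ω → ℤ × ℤ} {v : ℤ × ℤ} (hS : IsCombWalk P S v) :
    IsCombWalk P (fun t ω => combReflect (S t ω)) (combReflect v) := by
  refine ⟨hS.1, fun t => (measurable_of_countable combReflect).comp (hS.2.1 t), fun n path => ?_⟩
  simp only [combReflect_eq_iff, hS.2.2 n fun i => combReflect (path i), pathProb,
    stepProb_combReflect]

theorem combReflect_mem_combD {ρ : ℝ} {z : ℤ × ℤ} : combReflect z ∈ combD ρ ↔ z ∈ combD ρ := by
  simp [combD, combReflect]

theorem hitsBeforeExit_combReflect {Ω : Type*} (S : ℕ → Ω → ℤ × ℤ) (ρ : ℝ) (x : ℤ) :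
    hitsBeforeExit (fun t ω => combReflect (S t ω)) (combD ρ) {(-x, 0)} =
      hitsBeforeExit S (combD ρ) {(x, 0)} := by
  have hreflect : combReflect (-x, 0) = (x, 0) := by rw [combReflect, neg_neg]
  simp only [hitsBeforeExit, hitTime, Set.mem_compl_iff, Set.mem_singleton_iff,
    combReflect_mem_combD, combReflect_eq_iff, hreflect]

/-! ### The barrier -/

theorem finite_setOf_abs_intCast_lt (r : ℝ) : {n : ℤ | |(n : ℝ)| < r}.Finite := by
  refine (Set.finite_Icc (-⌈r⌉) ⌈r⌉).subset fun n hn => abs_le.mp ?_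
  exact_mod_cast (le_of_lt hn).trans (Int.le_ceil r)

theorem finite_combD (ρ : ℝ) : (combD ρ).Finite := by
  refine ((finite_setOf_abs_intCast_lt ρ).prod (finite_setOf_abs_intCast_lt (ρ ^ 2 / 3))).subset ?_
  rintro z ⟨hz₁, hz₂⟩
  refine ⟨hz₁, hz₂.trans_le ?_⟩
  have := abs_nonneg (z.1 : ℝ)
  gcongr
  linarith

/-- The values of the barrier on the axis: a discrete subsolution of `φ'' = 6 φ / (ρ - |t|)²`
away from `X`, with `φ 0 = 1`. -/
noncomputable def axisProfile (ρ : ℝ) (X t : ℤ) : ℝ :=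
  if t ≤ 0 then ((ρ + t) / ρ) ^ 3
  else if t ≤ X then 3 / 2 * (ρ / (ρ - t)) ^ 2 - 1 / 2
  else 0

/-- The profile of the barrier along a tooth: linear decay with slope `c` down to `0`. -/
noncomputable def toothProfile (c : ℝ) (y : ℤ) : ℝ := max 0 (1 - c * |(y : ℝ)|)

/-- The subharmonic function on `𝒟(ρ) \ {(X, 0)}` from which the hitting probability of `(X, 0)`
is bounded below. -/
noncomputable def barrier (ρ : ℝ) (X : ℤ) (z : ℤ × ℤ) : ℝ :=
  axisProfile ρ X z.1 * toothProfile (3 / (ρ - |(z.1 : ℝ)|) ^ 2) z.2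

theorem toothProfile_nonneg (c : ℝ) (y : ℤ) : 0 ≤ toothProfile c y := le_max_left _ _

theorem toothProfile_zero (c : ℝ) : toothProfile c 0 = 1 := by simp [toothProfile]

theorem two_mul_toothProfile_le (c : ℝ) {y : ℤ} (hy : y ≠ 0) :
    2 * toothProfile c y ≤ toothProfile c (y + 1) + toothProfile c (y - 1) := by
  have habs : |((y + 1 : ℤ) : ℝ)| + |((y - 1 : ℤ) : ℝ)| = 2 * |(y : ℝ)| := by
    have : |y + 1| + |y - 1| = 2 * |y| := by grind
    exact_mod_cast this
  have hlinear : 1 - c * |((y + 1 : ℤ) : ℝ)| + (1 - c * |((y - 1 : ℤ) : ℝ)|) =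
      2 * (1 - c * |(y : ℝ)|) := by
    linear_combination -c * habs
  have habove := le_max_right 0 (1 - c * |((y + 1 : ℤ) : ℝ)|)
  have hbelow := le_max_right 0 (1 - c * |((y - 1 : ℤ) : ℝ)|)
  rcases max_choice 0 (1 - c * |(y : ℝ)|) with h | h
  · rw [toothProfile, h, mul_zero]
    exact add_nonneg (toothProfile_nonneg _ _) (toothProfile_nonneg _ _)
  · rw [toothProfile, h]
    exact hlinear ▸ add_le_add habove hbelow

theorem two_mul_inv_sq_le {b : ℝ} (hb : 1 < b) :
    2 * (1 / b ^ 2) * (1 + 3 / b ^ 2) ≤ 1 / (b - 1) ^ 2 + 1 / (b + 1) ^ 2 := by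
  have : 0 < b := by linarith
  have : 0 < b - 1 := by linarith
  have hleft : 2 * (1 / b ^ 2) * (1 + 3 / b ^ 2) = (2 * b ^ 2 + 6) / b ^ 4 := by
    field_simp
    ring
  have hright : 1 / (b - 1) ^ 2 + 1 / (b + 1) ^ 2 =
      (2 * b ^ 2 + 2) / ((b - 1) ^ 2 * (b + 1) ^ 2) := by
    field_simp
    ring
  rw [hleft, hright, div_le_div_iff₀ (by positivity) (by positivity)]
  nlinarith

section Barrier

variable {ρ : ℝ} {X t : ℤ}

theorem axisProfile_of_nonpos (ht : t ≤ 0) : axisProfile ρ X t = ((ρ + t) / ρ) ^ 3 := if_pos ht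

theorem axisProfile_of_nonneg (hρ : 0 < ρ) (ht : 0 ≤ t) (htX : t ≤ X) :
    axisProfile ρ X t = 3 / 2 * (ρ / (ρ - t)) ^ 2 - 1 / 2 := by
  rcases ht.eq_or_lt with rfl | ht
  · rw [axisProfile_of_nonpos le_rfl]
    norm_num [hρ.ne']
  · rw [axisProfile, if_neg ht.not_ge, if_pos htX]

theorem axisProfile_of_lt (hX : 0 ≤ X) (htX : X < t) : axisProfile ρ X t = 0 := by
  rw [axisProfile, if_neg (by omega), if_neg (by omega)]

theorem axisProfile_nonneg (hX : 0 ≤ X) (hXρ : X < ρ) (ht : -ρ < t) :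
    0 ≤ axisProfile ρ X t := by
  have hρ : 0 < ρ := lt_of_le_of_lt (by exact_mod_cast hX) hXρ
  rcases lt_or_ge X t with htX | htX
  · exact (axisProfile_of_lt hX htX).ge
  rcases le_total t 0 with ht₀ | ht₀
  · rw [axisProfile_of_nonpos ht₀]
    have : 0 < ρ + t := by linarith
    positivity
  · rw [axisProfile_of_nonneg hρ ht₀ htX]
    have ht' : (0 : ℝ) ≤ t := by exact_mod_cast ht₀
    have htρ : (t : ℝ) < ρ := lt_of_le_of_lt (by exact_mod_cast htX) hXρ
    have : 1 ≤ ρ / (ρ - t) := (one_le_div₀ (by linarith)).mpr (by linarith)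
    have := one_le_pow₀ this (n := 2)
    linarith

theorem two_mul_axisProfile_mul_le_of_neg (ht₀ : t < 0) (ht : -ρ < t) :
    2 * axisProfile ρ X t * (1 + 3 / (ρ + t) ^ 2) ≤
      axisProfile ρ X (t + 1) + axisProfile ρ X (t - 1) := by
  rw [axisProfile_of_nonpos ht₀.le, axisProfile_of_nonpos (by omega),
    axisProfile_of_nonpos (by omega)]
  have ht' : (t : ℝ) < 0 := by exact_mod_cast ht₀
  have hρ : 0 < ρ := by linarith
  have hb : 0 < ρ + t := by linarith
  apply le_of_eq
  push_cast
  field_simp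
  ring

theorem two_mul_axisProfile_mul_le_zero (hX : 0 < X) (hXρ : X < ρ) :
    2 * axisProfile ρ X 0 * (1 + 3 / ρ ^ 2) ≤ axisProfile ρ X 1 + axisProfile ρ X (-1) := by
  have hρ : 1 < ρ := lt_of_le_of_lt (by exact_mod_cast hX) hXρ
  have hρ₁ : 0 < ρ - 1 := by linarith
  rw [axisProfile_of_nonpos le_rfl, axisProfile_of_nonneg (by linarith) zero_le_one hX,
    axisProfile_of_nonpos (by norm_num)]
  push_cast
  have hdiff : 3 / 2 * (ρ / (ρ - 1)) ^ 2 - 1 / 2 + ((ρ + -1) / ρ) ^ 3 -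
      2 * ((ρ + 0) / ρ) ^ 3 * (1 + 3 / ρ ^ 2) =
        (3 / 2 * ρ ^ 3 + 2 * ρ ^ 2 - ρ - 1) / (ρ ^ 3 * (ρ - 1) ^ 2) := by
    field_simp
    ring
  have hnum : 0 ≤ 3 / 2 * ρ ^ 3 + 2 * ρ ^ 2 - ρ - 1 := by
    nlinarith [pow_pos (zero_lt_one.trans hρ) 3]
  rw [← sub_nonneg, hdiff]
  positivity

theorem two_mul_axisProfile_mul_le_of_pos (hXρ : X < ρ) (ht₀ : 0 < t) (htX : t < X) :
    2 * axisProfile ρ X t * (1 + 3 / (ρ - t) ^ 2) ≤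
      axisProfile ρ X (t + 1) + axisProfile ρ X (t - 1) := by
  have ht' : (0 : ℝ) < t := by exact_mod_cast ht₀
  have htX' : (t : ℝ) + 1 ≤ X := by exact_mod_cast htX
  have hρ : 0 < ρ := by linarith
  rw [axisProfile_of_nonneg hρ ht₀.le htX.le, axisProfile_of_nonneg hρ (by omega) htX,
    axisProfile_of_nonneg hρ (by omega) (by omega)]
  push_cast
  rw [← sub_sub, show ρ - ((t : ℝ) - 1) = ρ - t + 1 by ring]
  set b := ρ - t
  have hinv := mul_le_mul_of_nonneg_left (two_mul_inv_sq_le (b := b) (by linarith))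
    (by positivity : 0 ≤ 3 / 2 * ρ ^ 2)
  have hconst : 0 ≤ 3 / b ^ 2 := by positivity
  simp only [div_pow]
  calc 2 * (3 / 2 * (ρ ^ 2 / b ^ 2) - 1 / 2) * (1 + 3 / b ^ 2)
      = 3 / 2 * ρ ^ 2 * (2 * (1 / b ^ 2) * (1 + 3 / b ^ 2)) - 1 - 3 / b ^ 2 := by ring
    _ ≤ 3 / 2 * ρ ^ 2 * (1 / (b - 1) ^ 2 + 1 / (b + 1) ^ 2) - 1 := by linarith
    _ = 3 / 2 * (ρ ^ 2 / (b - 1) ^ 2) - 1 / 2 + (3 / 2 * (ρ ^ 2 / (b + 1) ^ 2) - 1 / 2) := by ring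

theorem two_mul_axisProfile_mul_le (hX : 0 ≤ X) (hXρ : X < ρ) (ht : |(t : ℝ)| < ρ) (htX : t ≠ X) :
    2 * axisProfile ρ X t * (1 + 3 / (ρ - |(t : ℝ)|) ^ 2) ≤
      axisProfile ρ X (t + 1) + axisProfile ρ X (t - 1) := by
  rcases htX.lt_or_gt with htX | htX
  · rcases lt_trichotomy t 0 with ht₀ | rfl | ht₀
    · rw [abs_of_neg (by exact_mod_cast ht₀), sub_neg_eq_add]
      exact two_mul_axisProfile_mul_le_of_neg ht₀ (abs_lt.mp ht).1
    · simpa using two_mul_axisProfile_mul_le_zero htX hXρ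
    · rw [abs_of_pos (by exact_mod_cast ht₀)]
      exact two_mul_axisProfile_mul_le_of_pos hXρ ht₀ htX
  · have hX' : (X : ℝ) ≤ (t - 1 : ℤ) := by exact_mod_cast Int.le_sub_one_of_lt htX
    have hX₀ : (0 : ℝ) ≤ X := by exact_mod_cast hX
    rw [axisProfile_of_lt hX htX, axisProfile_of_lt hX (by omega), mul_zero, zero_mul, zero_add]
    exact axisProfile_nonneg hX hXρ (by linarith)

theorem barrier_axis (ρ : ℝ) (X t : ℤ) : barrier ρ X (t, 0) = axisProfile ρ X t := by
  rw [barrier, toothProfile_zero, mul_one]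

theorem combSubharmonicOn_barrier (hX : 0 ≤ X) (hXρ : X < ρ) :
    CombSubharmonicOn (barrier ρ X) (combD ρ \ {(X, 0)}) := by
  rintro ⟨t, y⟩ ⟨⟨ht : |(t : ℝ)| < ρ, -⟩, hne⟩
  have hφ := axisProfile_nonneg hX hXρ (abs_lt.mp ht).1
  by_cases hy : y = 0
  · subst hy
    have htX : t ≠ X := fun h => hne (by rw [h, Set.mem_singleton_iff])
    have haxis := two_mul_axisProfile_mul_le hX hXρ ht htX
    rw [combAvg_axis, barrier_axis, barrier_axis, barrier_axis]
    simp only [barrier]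
    set c := 3 / (ρ - |(t : ℝ)|) ^ 2
    have hup : 1 - c ≤ toothProfile c 1 := by simp [toothProfile]
    have hdown : 1 - c ≤ toothProfile c (-1) := by simp [toothProfile]
    linarith [mul_le_mul_of_nonneg_left hup hφ, mul_le_mul_of_nonneg_left hdown hφ]
  · rw [combAvg_tooth _ _ hy]
    simp only [barrier]
    linarith [mul_le_mul_of_nonneg_left
      (two_mul_toothProfile_le (3 / (ρ - |(t : ℝ)|) ^ 2) hy) hφ]

theorem barrier_nonpos_of_notMem_combD (hX : 0 ≤ X) (hXρ : X < ρ) {z : ℤ × ℤ}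
    (hz : z ∉ combD ρ) : barrier ρ X z ≤ 0 := by
  obtain ⟨t, y⟩ := z
  have hρ : 0 < ρ := lt_of_le_of_lt (by exact_mod_cast hX) hXρ
  rcases lt_or_ge |(t : ℝ)| ρ with ht | ht
  · have hy : (ρ - |(t : ℝ)|) ^ 2 / 3 ≤ |(y : ℝ)| := not_lt.mp fun h => hz ⟨ht, h⟩
    have : 0 < ρ - |(t : ℝ)| := sub_pos.mpr ht
    have hone : 1 ≤ 3 / (ρ - |(t : ℝ)|) ^ 2 * |(y : ℝ)| := by
      rw [div_mul_eq_mul_div, one_le_div₀ (by positivity)]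
      linarith
    rw [barrier, toothProfile, max_eq_left (by linarith), mul_zero]
  · refine mul_nonpos_of_nonpos_of_nonneg ?_ (toothProfile_nonneg _ _)
    rcases le_abs.mp ht with ht | ht
    · exact (axisProfile_of_lt hX (by exact_mod_cast hXρ.trans_le ht)).le
    · have ht₀ : t ≤ 0 := by
        have : (t : ℝ) ≤ 0 := by linarith
        exact_mod_cast this
      rw [axisProfile_of_nonpos ht₀]
      exact Odd.pow_nonpos (by decide) (div_nonpos_of_nonpos_of_nonneg (by linarith) hρ.le)

theorem two_thirds_mul_sq_le_hitProb (hX : 0 ≤ X) (hXρ : X < ρ) :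
    2 / 3 * ((ρ - X) / ρ) ^ 2 ≤ hitProb (combD ρ) {(X, 0)} (0, 0) := by
  have hρ : 0 < ρ := lt_of_le_of_lt (by exact_mod_cast hX) hXρ
  have hb : 0 < ρ - X := sub_pos.mpr hXρ
  have htarget : ∀ z ∈ ({(X, 0)} : Set (ℤ × ℤ)), barrier ρ X z ≤ 3 / 2 * (ρ / (ρ - X)) ^ 2 := by
    rintro _ rfl
    rw [barrier_axis, axisProfile_of_nonneg hρ hX le_rfl]
    linarith
  have horigin : barrier ρ X (0, 0) = 1 := by
    rw [barrier_axis, axisProfile_of_nonpos le_rfl]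
    simp [hρ.ne']
  have hle := (combSubharmonicOn_barrier hX hXρ).le_mul_hitProb (finite_combD ρ)
    (fun _ => barrier_nonpos_of_notMem_combD hX hXρ) htarget (0, 0)
  rw [horigin] at hle
  calc 2 / 3 * ((ρ - X) / ρ) ^ 2 = 1 / (3 / 2 * (ρ / (ρ - X)) ^ 2) := by field_simp
    _ ≤ hitProb (combD ρ) {(X, 0)} (0, 0) := (div_le_iff₀' (by positivity)).mpr hle

end Barrier

theorem IsCombWalk.two_thirds_mul_sq_le_measureReal {Ω : Type*} [MeasurableSpace Ω]
    {P : Measure Ω} {S : ℕ → Ω → ℤ × ℤ} (hS : IsCombWalk P S (0, 0)) {ρ : ℝ} {x : ℤ}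
    (hx : |(x : ℝ)| < ρ) :
    2 / 3 * ((ρ - |(x : ℝ)|) / ρ) ^ 2 ≤ P.real (hitsBeforeExit S (combD ρ) {(x, 0)}) := by
  rcases le_total 0 x with hx₀ | hx₀
  · rw [abs_of_nonneg (by exact_mod_cast hx₀)] at hx ⊢
    exact (two_thirds_mul_sq_le_hitProb hx₀ hx).trans hS.hitProb_le_measureReal
  · have habs : |(x : ℝ)| = ((-x : ℤ) : ℝ) := by
      rw [abs_of_nonpos (by exact_mod_cast hx₀), Int.cast_neg]
    rw [habs] at hx ⊢
    rw [← hitsBeforeExit_combReflect]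
    exact (two_thirds_mul_sq_le_hitProb (by omega) hx).trans hS.reflect.hitProb_le_measureReal

/-- **Proposition (hitting a site of the x-axis before exiting `𝒟(ρ)`).**
There is `κ_a > 0`, independent of `ρ`, such that for `|x| ≤ ρ`,
`P₀(H((x,0)) < ℰ(ρ)) ≥ κ_a ((ρ−|x|)/ρ)²`. -/
theorem comb_hitting_axis :
    ∃ κa : ℝ, 0 < κa ∧
      ∀ ρ : ℝ, 0 < ρ → ∀ x : ℤ, |(x : ℝ)| ≤ ρ →
        ∀ (Ω : Type*) [MeasurableSpace Ω] (P : Measure Ω) (S : ℕ → Ω → ℤ × ℤ),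
          IsCombWalk P S (0, 0) →
          ENNReal.ofReal (κa * ((ρ - |(x : ℝ)|) / ρ) ^ 2) ≤
            P {ω | hitTime {((x, (0 : ℤ)) : ℤ × ℤ)} (fun t => S t ω) <
              hitTime (combD ρ)ᶜ (fun t => S t ω)} := by
  refine ⟨2 / 3, by norm_num, fun ρ _ x hx Ω _ P S hS => ?_⟩
  rcases hx.lt_or_eq with hx | hx
  · have := hS.1
    rw [ENNReal.ofReal_le_iff_le_toReal (measure_ne_top _ _)]
    exact hS.two_thirds_mul_sq_le_measureReal hx
  · simp [hx]
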